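/- Let n, a, r be natural numbers with r ≥ 1, and let M and N be n×a real matrices all of whose entries lie in {0,1}, such that every column of M and every column of N sums to 2, and every row of M and every row of N sums to r (so M and N are vertex–edge incidence matrices of r-regular graphs on n vertices with a edges). Then M ≡ N. -/

import Mathlib

/-!
The uniform matrices `S₁ = J / n` and `S₂ = J / a` witness the fractional isomorphism.
Every entry of `S₁ * M` and of `S₁ᵀ * N` is a column sum over `n`, that is `2 / n`, and every
entry of `N * S₂ᵀ` and of `M * S₂` is a row sum over `a`, that is `r / a`. Counting the total
weight of `M` by rows and by columns gives `n * r = a * 2`, so these values agree.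
-/

open Matrix

/-- A real square matrix is doubly stochastic if all its entries are nonnegative and
each of its rows and each of its columns sums to 1. -/
def DoublyStochastic {n : Type*} [Fintype n] (S : Matrix n n ℝ) : Prop :=
  (∀ i j, 0 ≤ S i j) ∧ (∀ i, ∑ j, S i j = 1) ∧ (∀ j, ∑ i, S i j = 1)

/-- Fractional isomorphism of hypergraphs given by their incidence matrices. -/
def FracIso {n m : Type*} [Fintype n] [Fintype m] (M N : Matrix n m ℝ) : Prop :=
  ∃ (S₁ : Matrix n n ℝ) (S₂ : Matrix m m ℝ),
    DoublyStochastic S₁ ∧ DoublyStochastic S₂ ∧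
    S₁ * M = N * S₂ᵀ ∧ M * S₂ = S₁ᵀ * N

lemma doublyStochastic_uniform (k : ℕ) :
    DoublyStochastic (Matrix.of fun _ _ : Fin k => (1 / k : ℝ)) := by
  -- When `k = 0` there are no rows or columns, so an index provides `k ≠ 0`.
  have key (i : Fin k) : (k : ℝ) * (1 / k) = 1 :=
    mul_one_div_cancel (Nat.cast_ne_zero.mpr i.pos.ne')
  refine ⟨fun i j => by simp, fun i => ?_, fun i => ?_⟩ <;> simpa using key i

theorem regular_graphs_frac_iso (n a r : ℕ) (hr : 1 ≤ r)
    (M N : Matrix (Fin n) (Fin a) ℝ)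
    (hM01 : ∀ i j, M i j = 0 ∨ M i j = 1) (hN01 : ∀ i j, N i j = 0 ∨ N i j = 1)
    (hMcol : ∀ j, ∑ i, M i j = 2) (hNcol : ∀ j, ∑ i, N i j = 2)
    (hMrow : ∀ i, ∑ j, M i j = r) (hNrow : ∀ i, ∑ j, N i j = r) :
    FracIso M N := by
  have hcount : (n : ℝ) * r = a * 2 := by
    have h := Finset.sum_comm (s := Finset.univ) (t := Finset.univ) (f := M)
    simpa [hMcol, hMrow] using h
  have hval (i : Fin n) (j : Fin a) : (1 / n : ℝ) * 2 = r * (1 / a) := by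
    have hn : (n : ℝ) ≠ 0 := Nat.cast_ne_zero.mpr i.pos.ne'
    have ha : (a : ℝ) ≠ 0 := Nat.cast_ne_zero.mpr j.pos.ne'
    field_simp
    linarith
  refine ⟨_, _, doublyStochastic_uniform n, doublyStochastic_uniform a, ?_, ?_⟩
  · ext i j
    simp only [Matrix.mul_apply, Matrix.transpose_apply, Matrix.of_apply,
      ← Finset.mul_sum, ← Finset.sum_mul, hMcol, hNrow]
    exact hval i j
  · ext i j
    simp only [Matrix.mul_apply, Matrix.transpose_apply, Matrix.of_apply,
      ← Finset.mul_sum, ← Finset.sum_mul, hNcol, hMrow]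
    exact (hval i j).symm
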